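/- arXiv:2509.16299 — 2 statements merged into one kernel-verified Lean document; each statement's English description precedes it below -/
import Mathlib

section
/- Let U₁ : [0,1]² → [0,1] be defined by: U₁(x,y) = 1 if max(x,y) = 1; U₁(x,y) = 0 if min(x,y) = 0 and max(x,y) < 1; and U₁(x,y) = min( x^(2^m), y^(2^n) ) whenever x ∈ (2^(−2^(n+1)), 2^(−2^n)] and y ∈ (2^(−2^(m+1)), 2^(−2^m)] for n, m ∈ ℤ. Define N₁ : [0,1] → [0,1] by N₁(0) = 1, N₁(1) = 0, and N₁(x) = 2^(−2^(−log₂(−log₂ x))) = 2^(1/log₂ x) for x ∈ (0,1); define N₂(x) = (N₁(x))² and U₂(x,y) = U₁(2^(−1/2), U₁(x,y)). Then: (i) N₁ and N₂ are continuous, strictly decreasing fuzzy negations, and N₁(2^(−2^n)) = 2^(−2^(−n)) for all n ∈ ℤ; (ii) U₂ is a disjunctive uninorm with neutral element 1/4; (iii) U₂(N₂(x), y) = U₁(N₁(x), y) for all x, y ∈ [0,1]. -/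
/-- A uninorm on `[0,1]` with neutral element `e`: commutative, associative,
increasing in each variable, `U x e = x`, mapping `[0,1]²` into `[0,1]`. -/
def IsUninorm (U : ℝ → ℝ → ℝ) (e : ℝ) : Prop :=
  e ∈ Set.Icc (0:ℝ) 1 ∧
  (∀ x ∈ Set.Icc (0:ℝ) 1, ∀ y ∈ Set.Icc (0:ℝ) 1, U x y ∈ Set.Icc (0:ℝ) 1) ∧
  (∀ x ∈ Set.Icc (0:ℝ) 1, ∀ y ∈ Set.Icc (0:ℝ) 1, U x y = U y x) ∧
  (∀ x ∈ Set.Icc (0:ℝ) 1, ∀ y ∈ Set.Icc (0:ℝ) 1, ∀ z ∈ Set.Icc (0:ℝ) 1,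
    U (U x y) z = U x (U y z)) ∧
  (∀ x ∈ Set.Icc (0:ℝ) 1, ∀ y ∈ Set.Icc (0:ℝ) 1, ∀ z ∈ Set.Icc (0:ℝ) 1,
    y ≤ z → U x y ≤ U x z) ∧
  (∀ x ∈ Set.Icc (0:ℝ) 1, ∀ y ∈ Set.Icc (0:ℝ) 1, ∀ z ∈ Set.Icc (0:ℝ) 1,
    x ≤ y → U x z ≤ U y z) ∧
  (∀ x ∈ Set.Icc (0:ℝ) 1, U x e = x)

/-- A fuzzy negation on `[0,1]`: `N 0 = 1`, `N 1 = 0`, decreasing,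
mapping `[0,1]` into `[0,1]`. -/
def IsFuzzyNegation (N : ℝ → ℝ) : Prop :=
  (∀ x ∈ Set.Icc (0:ℝ) 1, N x ∈ Set.Icc (0:ℝ) 1) ∧
  N 0 = 1 ∧ N 1 = 0 ∧
  (∀ x ∈ Set.Icc (0:ℝ) 1, ∀ y ∈ Set.Icc (0:ℝ) 1, x ≤ y → N y ≤ N x)

/-- The point `u^(n) = 2^(−2^n)` for `n ∈ ℤ`. -/
noncomputable def uPt (n : ℤ) : ℝ := (2 : ℝ) ^ (-((2 : ℝ) ^ n))

open Classical in
/-- The negation `N₁(x) = 2^(−2^(−log₂(−log₂ x)))` for `x ∈ (0,1)`,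
with `N₁ 0 = 1` and `N₁ 1 = 0`. -/
noncomputable def Nneg1 : ℝ → ℝ := fun x =>
  if x = 0 then 1 else if x = 1 then 0
  else (2 : ℝ) ^ (-((2 : ℝ) ^ (-(Real.logb 2 (-(Real.logb 2 x))))))

/-- The negation `N₂(x) = (N₁(x))²`. -/
noncomputable def Nneg2 : ℝ → ℝ := fun x => (Nneg1 x) ^ (2 : ℕ)

/-!
On `(0, 1)` the negation `N₁` is `2 ^ t ↦ 2 ^ t⁻¹` for `t < 0`. It is therefore an antitone
involution of `[0, 1]`, hence strictly antitone, and continuous because its image is an interval.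

The section of `U₁` at `u⁽ⁿ⁾`, the right endpoint of a block, is the power function `y ↦ y ^ 2ⁿ`.
In particular `U₁(u⁽⁻¹⁾, ·)` is the square root, so it sends `N₂ = N₁²` back to `N₁`, which by
associativity is (iii), and it sends `1/4` to the neutral element `1/2`. For any uninorm `U` with
neutral element `e = U(a, b)`, associativity and commutativity make `(x, y) ↦ U(a, U(x, y))` a
uninorm with neutral element `b`, which is (ii).
-/

open Set

section OrderTopology

variable {α β : Type*} [LinearOrder α] [TopologicalSpace α] [OrderTopology α]
  [LinearOrder β] [TopologicalSpace β] [OrderTopology β] {s : Set α} [s.OrdConnected] {f : α → β}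

theorem continuousOn_of_strictMonoOn_of_ordConnected_image [(f '' s).OrdConnected]
    (hf : StrictMonoOn f s) : ContinuousOn f s :=
  continuousOn_iff_continuous_domRestrict.2 <|
    continuous_subtype_val.comp (hf.orderIso f s).continuous

theorem continuousOn_of_strictAntiOn_of_ordConnected_image [himage : (f '' s).OrdConnected]
    (hf : StrictAntiOn f s) : ContinuousOn f s :=
  have : ((OrderDual.toDual ∘ f) '' s).OrdConnected := himage.dual
  have hdual : ContinuousOn (OrderDual.toDual ∘ f) s :=
    continuousOn_of_strictMonoOn_of_ordConnected_image hf.dual_right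
  continuous_ofDual.comp_continuousOn hdual

end OrderTopology

namespace IsFuzzyNegation

variable {N : ℝ → ℝ}

theorem of_antitoneOn (hN : AntitoneOn N (Icc 0 1)) (h0 : N 0 = 1) (h1 : N 1 = 0) :
    IsFuzzyNegation N := by
  refine ⟨fun x hx => ⟨?_, ?_⟩, h0, h1, fun x hx y hy => hN hx hy⟩
  · simpa only [h1] using hN hx (right_mem_Icc.2 zero_le_one) hx.2
  · simpa only [h0] using hN (left_mem_Icc.2 zero_le_one) hx hx.1

theorem mapsTo (hN : IsFuzzyNegation N) : MapsTo N (Icc 0 1) (Icc 0 1) := hN.1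

theorem pow (hN : IsFuzzyNegation N) {k : ℕ} (hk : k ≠ 0) : IsFuzzyNegation (fun x => N x ^ k) := by
  obtain ⟨hmem, h0, h1, hanti⟩ := hN
  refine of_antitoneOn (fun x hx y hy hxy => ?_) (by simp [h0]) (by simp [h1, hk])
  exact pow_le_pow_left₀ (hmem y hy).1 (hanti x hx y hy hxy) k

theorem strictAntiOn_pow (hN : IsFuzzyNegation N) (hanti : StrictAntiOn N (Icc 0 1)) {k : ℕ}
    (hk : k ≠ 0) : StrictAntiOn (fun x => N x ^ k) (Icc 0 1) :=
  fun _ hx _ hy hxy => pow_lt_pow_left₀ (hanti hx hy hxy) (hN.mapsTo hy).1 hk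

end IsFuzzyNegation

namespace IsUninorm

variable {U : ℝ → ℝ → ℝ} {e a b x y z : ℝ}

theorem assoc (hU : IsUninorm U e) (hx : x ∈ Icc (0 : ℝ) 1) (hy : y ∈ Icc (0 : ℝ) 1)
    (hz : z ∈ Icc (0 : ℝ) 1) : U (U x y) z = U x (U y z) := by
  obtain ⟨-, -, -, hassoc, -⟩ := hU
  exact hassoc x hx y hy z hz

theorem left_comm (hU : IsUninorm U e) (hx : x ∈ Icc (0 : ℝ) 1) (hy : y ∈ Icc (0 : ℝ) 1)
    (hz : z ∈ Icc (0 : ℝ) 1) : U x (U y z) = U y (U x z) := by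
  have hcomm : U x y = U y x := hU.2.2.1 x hx y hy
  rw [← hU.assoc hx hy hz, hcomm, hU.assoc hy hx hz]

theorem translate (hU : IsUninorm U e) (ha : a ∈ Icc (0 : ℝ) 1) (hb : b ∈ Icc (0 : ℝ) 1)
    (hab : U a b = e) : IsUninorm (fun x y => U a (U x y)) b := by
  obtain ⟨-, hmem, hcomm, -, hmono_right, hmono_left, hneutral⟩ := id hU
  refine ⟨hb, fun x hx y hy => hmem a ha _ (hmem x hx y hy), fun x hx y hy => ?comm,
    fun x hx y hy z hz => ?assoc, fun x hx y hy z hz hyz => ?mono_right,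
    fun x hx y hy z hz hxy => ?mono_left, fun x hx => ?neutral⟩
  case comm => simp only [hcomm x hx y hy]
  case assoc =>
    have hyz := hmem y hy z hz
    calc
      U a (U (U a (U x y)) z) = U a (U a (U x (U y z))) := by
        rw [hU.assoc ha (hmem x hx y hy) hz, hU.assoc hx hy hz]
      _ = U a (U x (U a (U y z))) := by rw [hU.left_comm ha hx hyz]
  case mono_right =>
    exact hmono_right a ha _ (hmem x hx y hy) _ (hmem x hx z hz) (hmono_right x hx y hy z hz hyz)
  case mono_left =>
    exact hmono_right a ha _ (hmem x hx z hz) _ (hmem y hy z hz) (hmono_left x hx y hy z hz hxy)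
  case neutral =>
    calc
      U a (U x b) = U x (U a b) := hU.left_comm ha hx hb
      _ = x := by rw [hab, hneutral x hx]

end IsUninorm

theorem uPt_pos (n : ℤ) : 0 < uPt n := Real.rpow_pos_of_pos two_pos _

theorem uPt_lt_one (n : ℤ) : uPt n < 1 :=
  Real.rpow_lt_one_of_one_lt_of_neg one_lt_two (neg_neg_of_pos (zpow_pos two_pos n))

theorem uPt_mem_Icc (n : ℤ) : uPt n ∈ Icc (0 : ℝ) 1 := ⟨(uPt_pos n).le, (uPt_lt_one n).le⟩

theorem strictAnti_uPt : StrictAnti uPt := fun _ _ hmn =>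
  Real.rpow_lt_rpow_of_exponent_lt one_lt_two
    (neg_lt_neg (zpow_lt_zpow_right₀ one_lt_two hmn))

theorem uPt_rpow_two_zpow (n m : ℤ) : uPt n ^ ((2 : ℝ) ^ m) = uPt (n + m) := by
  rw [uPt, uPt, ← Real.rpow_mul zero_le_two, neg_mul, zpow_add₀ two_ne_zero]

theorem exists_mem_Ioc_uPt {y : ℝ} (hy : y ∈ Ioo (0 : ℝ) 1) :
    ∃ m : ℤ, y ∈ Ioc (uPt (m + 1)) (uPt m) := by
  have hlog : 0 < -Real.logb 2 y := neg_pos.2 (Real.logb_neg one_lt_two hy.1 hy.2)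
  obtain ⟨m, hm, hm'⟩ := exists_mem_Ico_zpow hlog one_lt_two
  exact ⟨m, (Real.lt_logb_iff_rpow_lt one_lt_two hy.1).1 (neg_lt.1 hm'),
    (Real.logb_le_iff_le_rpow one_lt_two hy.1).1 (le_neg.1 hm)⟩

theorem Nneg1_zero : Nneg1 0 = 1 := by simp [Nneg1]

theorem Nneg1_one : Nneg1 1 = 0 := by simp [Nneg1]

theorem Nneg1_mem_Icc (x : ℝ) : Nneg1 x ∈ Icc (0 : ℝ) 1 := by
  unfold Nneg1
  split_ifs
  · exact right_mem_Icc.2 zero_le_one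
  · exact left_mem_Icc.2 zero_le_one
  · exact ⟨Real.rpow_nonneg zero_le_two _, Real.rpow_le_one_of_one_le_of_nonpos one_le_two
      (neg_nonpos.2 (Real.rpow_nonneg zero_le_two _))⟩

theorem Nneg1_of_mem_Ioo {x : ℝ} (hx : x ∈ Ioo (0 : ℝ) 1) :
    Nneg1 x = 2 ^ (Real.logb 2 x)⁻¹ := by
  have hlog : 0 < -Real.logb 2 x := neg_pos.2 (Real.logb_neg one_lt_two hx.1 hx.2)
  rw [Nneg1, if_neg hx.1.ne', if_neg hx.2.ne, Real.rpow_neg zero_le_two (Real.logb _ _),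
    Real.rpow_logb two_pos (by norm_num) hlog, inv_neg, neg_neg]

theorem Nneg1_two_rpow {t : ℝ} (ht : t < 0) : Nneg1 (2 ^ t) = 2 ^ t⁻¹ := by
  have hmem : (2 : ℝ) ^ t ∈ Ioo (0 : ℝ) 1 :=
    ⟨Real.rpow_pos_of_pos two_pos t, Real.rpow_lt_one_of_one_lt_of_neg one_lt_two ht⟩
  rw [Nneg1_of_mem_Ioo hmem, Real.logb_rpow two_pos (by norm_num)]

theorem Nneg1_uPt (n : ℤ) : Nneg1 (uPt n) = uPt (-n) := by
  rw [uPt, uPt, Nneg1_two_rpow (neg_neg_of_pos (zpow_pos two_pos n)), inv_neg, zpow_neg]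

theorem antitoneOn_Nneg1_Ioo : AntitoneOn Nneg1 (Ioo 0 1) := by
  intro x hx y hy hxy
  have hlog : Real.logb 2 x ≤ Real.logb 2 y := Real.logb_le_logb_of_le one_lt_two hx.1 hxy
  have hinv : (Real.logb 2 y)⁻¹ ≤ (Real.logb 2 x)⁻¹ :=
    (inv_le_inv_of_neg (Real.logb_neg one_lt_two hy.1 hy.2)
      (Real.logb_neg one_lt_two hx.1 hx.2)).2 hlog
  rw [Nneg1_of_mem_Ioo hx, Nneg1_of_mem_Ioo hy]
  exact Real.rpow_le_rpow_of_exponent_le one_le_two hinv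

theorem antitoneOn_Nneg1 : AntitoneOn Nneg1 (Icc 0 1) := by
  intro x hx y hy hxy
  rcases hx.1.eq_or_lt with rfl | hx0
  · simpa only [Nneg1_zero] using (Nneg1_mem_Icc y).2
  rcases hy.2.eq_or_lt with rfl | hy1
  · simpa only [Nneg1_one] using (Nneg1_mem_Icc x).1
  exact antitoneOn_Nneg1_Ioo ⟨hx0, hxy.trans_lt hy1⟩ ⟨hx0.trans_le hxy, hy1⟩ hxy

theorem isFuzzyNegation_Nneg1 : IsFuzzyNegation Nneg1 :=
  .of_antitoneOn antitoneOn_Nneg1 Nneg1_zero Nneg1_one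

theorem leftInvOn_Nneg1 : LeftInvOn Nneg1 Nneg1 (Icc 0 1) := by
  intro x hx
  rcases eq_endpoints_or_mem_Ioo_of_mem_Icc hx with rfl | rfl | hx
  · rw [Nneg1_zero, Nneg1_one]
  · rw [Nneg1_one, Nneg1_zero]
  · have hlog : Real.logb 2 x < 0 := Real.logb_neg one_lt_two hx.1 hx.2
    rw [Nneg1_of_mem_Ioo hx, Nneg1_two_rpow (inv_lt_zero'.2 hlog), inv_inv,
      Real.rpow_logb two_pos (by norm_num) hx.1]

theorem strictAntiOn_Nneg1 : StrictAntiOn Nneg1 (Icc 0 1) :=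
  antitoneOn_Nneg1.strictAntiOn_of_injOn leftInvOn_Nneg1.injOn

theorem image_Nneg1_Icc : Nneg1 '' Icc 0 1 = Icc 0 1 :=
  (InvOn.bijOn ⟨leftInvOn_Nneg1, leftInvOn_Nneg1⟩ isFuzzyNegation_Nneg1.mapsTo
    isFuzzyNegation_Nneg1.mapsTo).image_eq

theorem continuousOn_Nneg1 : ContinuousOn Nneg1 (Icc 0 1) :=
  have : (Nneg1 '' Icc 0 1).OrdConnected := image_Nneg1_Icc.symm ▸ ordConnected_Icc
  continuousOn_of_strictAntiOn_of_ordConnected_image strictAntiOn_Nneg1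

/-- The defining equations of the operation `U₁`, whose sections at the points `uPt n` drive the
proof. It is a predicate because values outside `[0, 1]²` are left free. In `block`, the exponent of
each argument comes from the block containing the other one. -/
structure IsDyadicBlockOp (U : ℝ → ℝ → ℝ) : Prop where
  top : ∀ x ∈ Icc (0 : ℝ) 1, ∀ y ∈ Icc (0 : ℝ) 1, max x y = 1 → U x y = 1
  bot : ∀ x ∈ Icc (0 : ℝ) 1, ∀ y ∈ Icc (0 : ℝ) 1, min x y = 0 → max x y < 1 → U x y = 0
  block : ∀ n m : ℤ, ∀ x ∈ Ioc (uPt (n + 1)) (uPt n), ∀ y ∈ Ioc (uPt (m + 1)) (uPt m),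
    U x y = min (x ^ ((2 : ℝ) ^ m)) (y ^ ((2 : ℝ) ^ n))

namespace IsDyadicBlockOp

variable {U : ℝ → ℝ → ℝ} {y : ℝ}

theorem apply_uPt (hU : IsDyadicBlockOp U) (n : ℤ) (hy : y ∈ Icc (0 : ℝ) 1) :
    U (uPt n) y = y ^ ((2 : ℝ) ^ n) := by
  have hn := uPt_mem_Icc n
  rcases eq_endpoints_or_mem_Ioo_of_mem_Icc hy with rfl | rfl | hy'
  · rw [Real.zero_rpow (zpow_ne_zero n two_ne_zero)]
    exact hU.bot _ hn _ hy (min_eq_right hn.1) (by simpa only [max_eq_left hn.1] using uPt_lt_one n)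
  · rw [Real.one_rpow]
    exact hU.top _ hn _ hy (max_eq_right hn.2)
  · obtain ⟨m, hm⟩ := exists_mem_Ioc_uPt hy'
    have hle : y ^ ((2 : ℝ) ^ n) ≤ uPt n ^ ((2 : ℝ) ^ m) := calc
      y ^ ((2 : ℝ) ^ n) ≤ uPt m ^ ((2 : ℝ) ^ n) :=
        Real.rpow_le_rpow hy.1 hm.2 (zpow_nonneg zero_le_two n)
      _ = uPt n ^ ((2 : ℝ) ^ m) := by rw [uPt_rpow_two_zpow, uPt_rpow_two_zpow, add_comm]
    rw [hU.block n m _ ⟨strictAnti_uPt (lt_add_one n), le_rfl⟩ _ hm, min_eq_right hle]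

theorem apply_uPt_neg_one_sq (hU : IsDyadicBlockOp U) (hy : y ∈ Icc (0 : ℝ) 1) :
    U (uPt (-1)) (y ^ 2) = y := by
  rw [hU.apply_uPt (-1) ⟨sq_nonneg y, pow_le_one₀ hy.1 hy.2⟩, zpow_neg_one]
  exact mod_cast Real.pow_rpow_inv_natCast hy.1 two_ne_zero

end IsDyadicBlockOp

theorem stmt18 (U₁ : ℝ → ℝ → ℝ)
    (htop : ∀ x ∈ Set.Icc (0:ℝ) 1, ∀ y ∈ Set.Icc (0:ℝ) 1, max x y = 1 → U₁ x y = 1)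
    (hbot : ∀ x ∈ Set.Icc (0:ℝ) 1, ∀ y ∈ Set.Icc (0:ℝ) 1,
      min x y = 0 → max x y < 1 → U₁ x y = 0)
    (hmid : ∀ n m : ℤ, ∀ x ∈ Set.Ioc (uPt (n + 1)) (uPt n), ∀ y ∈ Set.Ioc (uPt (m + 1)) (uPt m),
      U₁ x y = min (x ^ ((2 : ℝ) ^ m)) (y ^ ((2 : ℝ) ^ n)))
    (hU₁ : IsUninorm U₁ (1/2)) (hd₁ : U₁ 1 0 = 1) :
    -- (i) `N₁` and `N₂` are continuous, strictly decreasing fuzzy negations and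
    -- `N₁(2^(−2^n)) = 2^(−2^(−n))`
    (IsFuzzyNegation Nneg1 ∧ ContinuousOn Nneg1 (Set.Icc 0 1) ∧
      StrictAntiOn Nneg1 (Set.Icc 0 1) ∧
      IsFuzzyNegation Nneg2 ∧ ContinuousOn Nneg2 (Set.Icc 0 1) ∧
      StrictAntiOn Nneg2 (Set.Icc 0 1) ∧
      (∀ n : ℤ, Nneg1 (uPt n) = uPt (-n))) ∧
    -- (ii) `U₂(x,y) = U₁(2^(−1/2), U₁(x,y))` is a disjunctive uninorm with neutral 1/4
    (IsUninorm (fun x y => U₁ (uPt (-1)) (U₁ x y)) (1/4) ∧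
      U₁ (uPt (-1)) (U₁ 1 0) = 1) ∧
    -- (iii) `U₂(N₂(x), y) = U₁(N₁(x), y)`
    (∀ x ∈ Set.Icc (0:ℝ) 1, ∀ y ∈ Set.Icc (0:ℝ) 1,
      U₁ (uPt (-1)) (U₁ (Nneg2 x) y) = U₁ (Nneg1 x) y) := by
  have hU : IsDyadicBlockOp U₁ := ⟨htop, hbot, hmid⟩
  have hu := uPt_mem_Icc (-1)
  have hN₁ := isFuzzyNegation_Nneg1
  have hN₂ : IsFuzzyNegation Nneg2 := hN₁.pow two_ne_zero
  have hinverse : U₁ (uPt (-1)) (1 / 4) = 1 / 2 := by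
    rw [show (1 / 4 : ℝ) = (1 / 2) ^ 2 by norm_num, hU.apply_uPt_neg_one_sq (by norm_num)]
  refine ⟨⟨hN₁, continuousOn_Nneg1, strictAntiOn_Nneg1, hN₂, continuousOn_Nneg1.pow 2,
    hN₁.strictAntiOn_pow strictAntiOn_Nneg1 two_ne_zero, Nneg1_uPt⟩,
    ⟨hU₁.translate hu (by norm_num) hinverse, ?disjunctive⟩, fun x hx y hy => ?negations⟩
  case disjunctive => rw [hd₁, hU.apply_uPt (-1) (by norm_num), Real.one_rpow]
  case negations =>
    calc
      U₁ (uPt (-1)) (U₁ (Nneg2 x) y) = U₁ (U₁ (uPt (-1)) (Nneg1 x ^ 2)) y :=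
        (hU₁.assoc hu (hN₂.mapsTo hx) hy).symm
      _ = U₁ (Nneg1 x) y := by rw [hU.apply_uPt_neg_one_sq (hN₁.mapsTo hx)]
end

section
/- Let e ∈ (0,1) and define U : [0,1]² → [0,1] by: U(x,y) = 1 if max(x,y) = 1; U(x,y) = max(x,y) if x, y ∈ (e,1); U(x,y) = 0 if x, y ∈ [0,e); U(x,y) = x if y = e; U(x,y) = y if x = e; and U(x,y) = min(x,y) otherwise. Then U is a disjunctive uninorm with neutral element e, and for every α ∈ (0,1) with α ≠ e the function s ↦ U(s, α) is not continuous; consequently, for any continuous fuzzy negation N, the only horizontal cut s ↦ U(s, α) with α ∈ (0,1) that is continuous and increasing with U(0,α) = 0 and U(1,α) = 1 is the one with α = e. -/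
open Classical in
/-- The uninorm of Example 4 whose underlying functions are the maximum t-conorm
and the drastic product t-norm. -/
noncomputable def Udp (e : ℝ) : ℝ → ℝ → ℝ := fun x y =>
  if max x y = 1 then 1
  else if e < x ∧ x < 1 ∧ e < y ∧ y < 1 then max x y
  else if x < e ∧ y < e then 0
  else if y = e then x
  else if x = e then y
  else min x y

/-!
Apart from the annihilator `1`, the interval splits into a lower part `[0, e)` and an upper part
`[e, 1)`. On `[0, 1)` the operation `Udp e` is the maximum of two upper elements, `0` on two lower
ones, and returns the lower one of a mixed pair. Hence a product of three factors below `1` depends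
only on how many of them are lower: it is the maximum if none is, the lower factor if there is
exactly one, and `0` otherwise.

A horizontal cut at `α ∈ (0, 1)` runs from `0` to `1`. If `α < e`, it takes only the values `0`,
`α` and `1`; if `e < α`, it jumps over `[e, α)`. Either way the intermediate value theorem fails.
-/

theorem IsUninorm.of_comm {U : ℝ → ℝ → ℝ} {e : ℝ} (he : e ∈ Set.Icc (0 : ℝ) 1)
    (hmem : ∀ x ∈ Set.Icc (0 : ℝ) 1, ∀ y ∈ Set.Icc (0 : ℝ) 1, U x y ∈ Set.Icc (0 : ℝ) 1)
    (hcomm : ∀ x ∈ Set.Icc (0 : ℝ) 1, ∀ y ∈ Set.Icc (0 : ℝ) 1, U x y = U y x)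
    (hassoc : ∀ x ∈ Set.Icc (0 : ℝ) 1, ∀ y ∈ Set.Icc (0 : ℝ) 1, ∀ z ∈ Set.Icc (0 : ℝ) 1,
      U (U x y) z = U x (U y z))
    (hmono : ∀ x ∈ Set.Icc (0 : ℝ) 1, MonotoneOn (U x) (Set.Icc 0 1))
    (hneutral : ∀ x ∈ Set.Icc (0 : ℝ) 1, U x e = x) : IsUninorm U e := by
  refine ⟨he, hmem, hcomm, hassoc, fun x hx y hy z hz hyz => hmono x hx hy hz hyz,
    fun x hx y hy z hz hxy => ?_, hneutral⟩
  rw [hcomm x hx z hz, hcomm y hy z hz]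
  exact hmono z hz hx hy hxy

theorem not_continuousOn_Icc_of_forall_ne {X Y : Type*} [ConditionallyCompleteLinearOrder X]
    [DenselyOrdered X] [TopologicalSpace X] [OrderTopology X] [LinearOrder Y] [TopologicalSpace Y]
    [OrderClosedTopology Y] {f : X → Y} {a b : X} {c : Y} (hab : a ≤ b)
    (hc : c ∈ Set.Icc (f a) (f b)) (hne : ∀ x ∈ Set.Icc a b, f x ≠ c) :
    ¬ ContinuousOn f (Set.Icc a b) := by
  intro hf
  obtain ⟨x, hx, hfx⟩ := intermediate_value_Icc hab hf hc
  exact hne x hx hfx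

section Udp

variable {e x y z α s : ℝ}

theorem udp_comm (e x y : ℝ) : Udp e x y = Udp e y x := by
  grind [Udp]

theorem udp_one_right (hx : x ≤ 1) : Udp e x 1 = 1 := by
  simp [Udp, hx]

theorem udp_one_left (hy : y ≤ 1) : Udp e 1 y = 1 := by
  rw [udp_comm, udp_one_right hy]

theorem udp_eq_max (hx : e ≤ x) (hx1 : x < 1) (hy : e ≤ y) (hy1 : y < 1) :
    Udp e x y = max x y := by
  grind [Udp]

theorem udp_eq_zero (he : e ≤ 1) (hx : x < e) (hy : y < e) : Udp e x y = 0 := by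
  grind [Udp]

theorem udp_eq_left (hx : x < e) (hy : e ≤ y) (hy1 : y < 1) : Udp e x y = x := by
  grind [Udp]

theorem udp_eq_right (hx : e ≤ x) (hx1 : x < 1) (hy : y < e) : Udp e x y = y := by
  rw [udp_comm, udp_eq_left hy hx hx1]

theorem udp_nonneg (hx : 0 ≤ x) (hy : 0 ≤ y) : 0 ≤ Udp e x y := by
  unfold Udp
  split_ifs <;> positivity

theorem udp_le_one (hx : x ≤ 1) (hy : y ≤ 1) : Udp e x y ≤ 1 := by
  grind [Udp]

theorem udp_self_right (he : e < 1) (hx : x ≤ 1) : Udp e x e = x := by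
  rcases hx.eq_or_lt with rfl | hx1
  · exact udp_one_left he.le
  rcases lt_or_ge x e with hxe | hex
  · exact udp_eq_left hxe le_rfl he
  · rw [udp_eq_max hex hx1 le_rfl he, max_eq_left hex]

theorem udp_assoc_of_lt_one (he0 : 0 < e) (he1 : e ≤ 1) (hx1 : x < 1) (hy1 : y < 1)
    (hz1 : z < 1) : Udp e (Udp e x y) z = Udp e x (Udp e y z) := by
  rcases lt_or_ge x e with hx | hx <;> rcases lt_or_ge y e with hy | hy <;>
    rcases lt_or_ge z e with hz | hz
  · rw [udp_eq_zero he1 hx hy, udp_eq_zero he1 hy hz, udp_eq_zero he1 he0 hz,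
      udp_eq_zero he1 hx he0]
  · rw [udp_eq_zero he1 hx hy, udp_eq_left hy hz hz1, udp_eq_left he0 hz hz1,
      udp_eq_zero he1 hx hy]
  · rw [udp_eq_left hx hy hy1, udp_eq_right hy hy1 hz]
  · rw [udp_eq_left hx hy hy1, udp_eq_left hx hz hz1, udp_eq_max hy hy1 hz hz1,
      udp_eq_left hx (le_max_of_le_left hy) (max_lt hy1 hz1)]
  · rw [udp_eq_right hx hx1 hy, udp_eq_zero he1 hy hz, udp_eq_right hx hx1 he0]
  · rw [udp_eq_right hx hx1 hy, udp_eq_left hy hz hz1, udp_eq_right hx hx1 hy]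
  · rw [udp_eq_max hx hx1 hy hy1, udp_eq_right hy hy1 hz, udp_eq_right hx hx1 hz,
      udp_eq_right (le_max_of_le_left hx) (max_lt hx1 hy1) hz]
  · rw [udp_eq_max hx hx1 hy hy1, udp_eq_max hy hy1 hz hz1,
      udp_eq_max (le_max_of_le_left hx) (max_lt hx1 hy1) hz hz1,
      udp_eq_max hx hx1 (le_max_of_le_left hy) (max_lt hy1 hz1), max_assoc]

theorem udp_assoc (he0 : 0 < e) (he1 : e ≤ 1) (hx : x ≤ 1) (hy : y ≤ 1) (hz : z ≤ 1) :
    Udp e (Udp e x y) z = Udp e x (Udp e y z) := by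
  rcases hx.eq_or_lt with rfl | hx1
  · rw [udp_one_left hy, udp_one_left hz, udp_one_left (udp_le_one hy hz)]
  rcases hy.eq_or_lt with rfl | hy1
  · rw [udp_one_right hx, udp_one_left hz, udp_one_right hx]
  rcases hz.eq_or_lt with rfl | hz1
  · rw [udp_one_right hy, udp_one_right hx, udp_one_right (udp_le_one hx hy)]
  exact udp_assoc_of_lt_one he0 he1 hx1 hy1 hz1

theorem udp_monotoneOn_right (he : e ≤ 1) (hx : x ∈ Set.Icc (0 : ℝ) 1) :
    MonotoneOn (Udp e x) (Set.Icc 0 1) := by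
  intro y hy z hz hyz
  rcases hz.2.eq_or_lt with rfl | hz1
  · rw [udp_one_right hx.2]
    exact udp_le_one hx.2 hy.2
  have hy1 : y < 1 := hyz.trans_lt hz1
  rcases hx.2.eq_or_lt with rfl | hx1
  · rw [udp_one_left hy.2, udp_one_left hz.2]
  rcases lt_or_ge x e with hxe | hex <;> rcases lt_or_ge y e with hye | hey
  · rw [udp_eq_zero he hxe hye]
    exact udp_nonneg hx.1 hz.1
  · rw [udp_eq_left hxe hey hy1, udp_eq_left hxe (hey.trans hyz) hz1]
  · rw [udp_eq_right hex hx1 hye]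
    rcases lt_or_ge z e with hze | hez
    · rwa [udp_eq_right hex hx1 hze]
    · rw [udp_eq_max hex hx1 hez hz1]
      exact le_max_of_le_right hyz
  · rw [udp_eq_max hex hx1 hey hy1, udp_eq_max hex hx1 (hey.trans hyz) hz1]
    exact max_le_max_left x hyz

theorem isUninorm_udp (he : e ∈ Set.Ioo (0 : ℝ) 1) : IsUninorm (Udp e) e :=
  .of_comm (Set.Ioo_subset_Icc_self he)
    (fun _ hx _ hy => ⟨udp_nonneg hx.1 hy.1, udp_le_one hx.2 hy.2⟩)
    (fun x _ y _ => udp_comm e x y)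
    (fun _ hx _ hy _ hz => udp_assoc he.1 he.2.le hx.2 hy.2 hz.2)
    (fun _ hx => udp_monotoneOn_right he.2.le hx)
    (fun _ hx => udp_self_right he.2 hx.2)

theorem udp_zero_left (he0 : 0 < e) (he1 : e ≤ 1) (hα : α < 1) : Udp e 0 α = 0 := by
  rcases lt_or_ge α e with hαe | heα
  · exact udp_eq_zero he1 he0 hαe
  · exact udp_eq_left he0 heα hα

theorem udp_eq_zero_or_eq_or_eq_one (he : e ≤ 1) (hα : α < e) (hs : s ≤ 1) :
    Udp e s α = 0 ∨ Udp e s α = α ∨ Udp e s α = 1 := by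
  rcases hs.eq_or_lt with rfl | hs1
  · exact .inr (.inr (udp_one_left (hα.le.trans he)))
  rcases lt_or_ge s e with hse | hes
  · exact .inl (udp_eq_zero he hse hα)
  · exact .inr (.inl (udp_eq_right hes hs1 hα))

theorem udp_lt_or_le_udp (hα : e ≤ α) (hα1 : α < 1) (hs : s ≤ 1) :
    Udp e s α < e ∨ α ≤ Udp e s α := by
  rcases hs.eq_or_lt with rfl | hs1
  · exact .inr (hα1.le.trans_eq (udp_one_left hα1.le).symm)
  rcases lt_or_ge s e with hse | hes
  · exact .inl ((udp_eq_left hse hα hα1).trans_lt hse)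
  · exact .inr ((le_max_right s α).trans_eq (udp_eq_max hes hs1 hα hα1).symm)

theorem not_continuousOn_udp_left (he : e ∈ Set.Ioo (0 : ℝ) 1) (hα : α ∈ Set.Ioo (0 : ℝ) 1)
    (hne : α ≠ e) : ¬ ContinuousOn (fun s => Udp e s α) (Set.Icc 0 1) := by
  suffices hgap : ∃ c ∈ Set.Icc (0 : ℝ) 1, ∀ s ∈ Set.Icc (0 : ℝ) 1, Udp e s α ≠ c by
    obtain ⟨c, hc, hcut⟩ := hgap
    refine not_continuousOn_Icc_of_forall_ne zero_le_one ?_ hcut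
    rwa [udp_zero_left he.1 he.2.le hα.2, udp_one_left hα.2.le]
  rcases hne.lt_or_gt with hαe | heα
  · refine ⟨α / 2, ⟨by linarith [hα.1], by linarith [hα.2]⟩, fun s hs hs_eq => ?_⟩
    rcases udp_eq_zero_or_eq_or_eq_one he.2.le hαe hs.2 with h | h | h <;>
      linarith [hα.1, hα.2]
  · refine ⟨e, Set.Ioo_subset_Icc_self he, fun s hs hs_eq => ?_⟩
    rcases udp_lt_or_le_udp heα.le hα.2 hs.2 with h | h <;> linarith

end Udp

theorem stmt19 (e : ℝ) (he : e ∈ Set.Ioo (0:ℝ) 1) :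
    IsUninorm (Udp e) e ∧ Udp e 1 0 = 1 ∧
    (∀ α ∈ Set.Ioo (0:ℝ) 1, α ≠ e → ¬ ContinuousOn (fun s => Udp e s α) (Set.Icc 0 1)) ∧
    (∀ α ∈ Set.Ioo (0:ℝ) 1,
      (ContinuousOn (fun s => Udp e s α) (Set.Icc 0 1) ∧
        MonotoneOn (fun s => Udp e s α) (Set.Icc 0 1) ∧
        Udp e 0 α = 0 ∧ Udp e 1 α = 1) → α = e) := by
  have hcut : ∀ α ∈ Set.Ioo (0 : ℝ) 1, α ≠ e →
      ¬ ContinuousOn (fun s => Udp e s α) (Set.Icc 0 1) :=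
    fun _ hα hne => not_continuousOn_udp_left he hα hne
  refine ⟨isUninorm_udp he, udp_one_left zero_le_one, hcut, fun α hα ⟨hcont, _⟩ => ?_⟩
  by_contra hne
  exact hcut α hα hne hcont
end
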